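/- arXiv:1804.07673 — 2 statements merged into one kernel-verified Lean document; each statement's English description precedes it below -/
import Mathlib

section
/- Let (G_1, …, G_5) be a 5-multigraph on four vertices not containing three crossing pairs, with total number of edges e ≥ 22. Then there exist two distinct vertices u and v whose pair uv has multiplicity exactly 5, i.e., uv is an edge of every G_i for i = 1, …, 5. -/
/-- A `p`-multigraph `G` (a `p`-tuple of simple graphs on a common vertex set) contains
three crossing pairs if there are three distinct indices `i, j, k` and four distinct
vertices `w, x, y, z` with `wx, yz ∈ G i`, `wy, xz ∈ G j`, and `wz, xy ∈ G k`. -/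
def HasThreeCrossingPairs {p : ℕ} {V : Type*} (G : Fin p → SimpleGraph V) : Prop :=
  ∃ i j k : Fin p, i ≠ j ∧ i ≠ k ∧ j ≠ k ∧
    ∃ w x y z : V, w ≠ x ∧ w ≠ y ∧ w ≠ z ∧ x ≠ y ∧ x ≠ z ∧ y ≠ z ∧
      (G i).Adj w x ∧ (G i).Adj y z ∧
      (G j).Adj w y ∧ (G j).Adj x z ∧
      (G k).Adj w z ∧ (G k).Adj x y

lemma sdr_aux (A B C : Finset (Fin 5)) (hA : 1 ≤ A.card) (hB : 2 ≤ B.card) (hC : 3 ≤ C.card) :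
    ∃ i ∈ A, ∃ j ∈ B, ∃ k ∈ C, i ≠ j ∧ i ≠ k ∧ j ≠ k := by
  obtain ⟨i, hi⟩ := Finset.card_pos.1 hA
  have h1 : 0 < (B \ {i}).card := by
    have := Finset.le_card_sdiff {i} B
    rw [Finset.card_singleton] at this; omega
  obtain ⟨j, hj⟩ := Finset.card_pos.1 h1
  have h2 : 0 < (C \ {i, j}).card := by
    have := Finset.le_card_sdiff {i, j} C
    have := Finset.card_le_two (a := i) (b := j)
    omega
  obtain ⟨k, hk⟩ := Finset.card_pos.1 h2
  simp at hj hk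
  exact ⟨i, hi, j, hj.1, k, hk.1, by grind⟩

lemma sdr_all (A B C : Finset (Fin 5)) (hA : 1 ≤ A.card) (hB : 1 ≤ B.card) (hC : 1 ≤ C.card)
    (hAB : 4 ≤ A.card + B.card) (hAC : 4 ≤ A.card + C.card) (hBC : 4 ≤ B.card + C.card)
    (h : 3 ≤ A.card ∨ 3 ≤ B.card ∨ 3 ≤ C.card) :
    ∃ i ∈ A, ∃ j ∈ B, ∃ k ∈ C, i ≠ j ∧ i ≠ k ∧ j ≠ k := by
  have h6 : (2 ≤ B.card ∧ 3 ≤ C.card) ∨ (2 ≤ C.card ∧ 3 ≤ B.card) ∨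
      (2 ≤ A.card ∧ 3 ≤ C.card) ∨ (2 ≤ C.card ∧ 3 ≤ A.card) ∨
      (2 ≤ A.card ∧ 3 ≤ B.card) ∨ (2 ≤ B.card ∧ 3 ≤ A.card) := by omega
  rcases h6 with h | h | h | h | h | h
  · exact sdr_aux A B C hA h.1 h.2
  · obtain ⟨i, hi, j, hj, k, hk, h⟩ := sdr_aux A C B hA h.1 h.2
    exact ⟨i, hi, k, hk, j, hj, by grind⟩
  · obtain ⟨i, hi, j, hj, k, hk, h⟩ := sdr_aux B A C hB h.1 h.2
    exact ⟨j, hj, i, hi, k, hk, by grind⟩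
  · obtain ⟨i, hi, j, hj, k, hk, h⟩ := sdr_aux B C A hB h.1 h.2
    exact ⟨k, hk, i, hi, j, hj, by grind⟩
  · obtain ⟨i, hi, j, hj, k, hk, h⟩ := sdr_aux C A B hC h.1 h.2
    exact ⟨j, hj, k, hk, i, hi, by grind⟩
  · obtain ⟨i, hi, j, hj, k, hk, h⟩ := sdr_aux C B A hC h.1 h.2
    exact ⟨k, hk, j, hj, i, hi, by grind⟩

open Classical in
lemma ncard_edges (H : SimpleGraph (Fin 4)) : H.edgeSet.ncard =
    (if H.Adj 0 1 then 1 else 0) + (if H.Adj 2 3 then 1 else 0) +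
    (if H.Adj 0 2 then 1 else 0) + (if H.Adj 1 3 then 1 else 0) +
    (if H.Adj 0 3 then 1 else 0) + (if H.Adj 1 2 then 1 else 0) := by
  have h := H.sum_degrees_eq_twice_card_edges
  have hd : ∀ v, H.degree v = ∑ w, if H.Adj v w then 1 else 0 := by
    intro v
    rw [← SimpleGraph.card_neighborFinset_eq_degree, SimpleGraph.neighborFinset_eq_filter,
      Finset.card_filter]
  rw [← SimpleGraph.coe_edgeFinset, Set.ncard_coe_finset]
  simp only [hd, Fin.sum_univ_four, SimpleGraph.irrefl, if_false] at h
  rw [H.adj_comm 1 0, H.adj_comm 2 0, H.adj_comm 3 0, H.adj_comm 2 1, H.adj_comm 3 1,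
    H.adj_comm 3 2] at h
  omega

open Classical in
theorem aux_main (G : Fin 5 → SimpleGraph (Fin 4))
    (hG : ¬ HasThreeCrossingPairs G) (he : 22 ≤ ∑ i, (G i).edgeSet.ncard) :
    ∃ u v : Fin 4, u ≠ v ∧ ∀ i : Fin 5, (G i).Adj u v := by
  by_contra hcon
  push Not at hcon
  let P : Fin 4 → Fin 4 → Finset (Fin 5) := fun u v => Finset.univ.filter fun i => (G i).Adj u v
  have hP : ∀ u v, u ≠ v → (P u v).card ≤ 4 := by
    intro u v huv
    obtain ⟨i, hi⟩ := hcon u v huv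
    have : (P u v).card < (Finset.univ : Finset (Fin 5)).card :=
      Finset.card_lt_card (Finset.ssubset_univ_iff.2 fun h => hi (by
        have := Finset.mem_univ i
        rw [← h] at this
        simpa [P] using this))
    simp at this; omega
  have hsum : 22 ≤ (P 0 1).card + (P 2 3).card + (P 0 2).card + (P 1 3).card + (P 0 3).card
      + (P 1 2).card := by
    simpa only [ncard_edges, Finset.sum_add_distrib, P, Finset.card_filter] using he
  have hI : ∀ A B : Finset (Fin 5), A.card + B.card ≤ (A ∩ B).card + 5 := by
    intro A B
    have := Finset.card_union_add_card_inter A B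
    have h2 := Finset.card_le_univ (A ∪ B)
    simp at h2; omega
  have a1 := hP 0 1 (by decide)
  have a2 := hP 2 3 (by decide)
  have a3 := hP 0 2 (by decide)
  have a4 := hP 1 3 (by decide)
  have a5 := hP 0 3 (by decide)
  have a6 := hP 1 2 (by decide)
  have b1 := hI (P 0 1) (P 2 3)
  have b2 := hI (P 0 2) (P 1 3)
  have b3 := hI (P 0 3) (P 1 2)
  obtain ⟨i, hi, j, hj, k, hk, h1, h2, h3⟩ := sdr_all (P 0 1 ∩ P 2 3) (P 0 2 ∩ P 1 3)
    (P 0 3 ∩ P 1 2) (by omega) (by omega) (by omega) (by omega) (by omega) (by omega) (by omega)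
  simp [P] at hi hj hk
  exact hG ⟨i, j, k, h1, h2, h3, 0, 1, 2, 3, by decide, by decide, by decide, by decide,
    by decide, by decide, hi.1, hi.2, hj.1, hj.2, hk.1, hk.2⟩

/-- In a `5`-multigraph on four vertices without three crossing pairs and with at least
`22` edges in total, some pair of distinct vertices has multiplicity `5`. -/
theorem five_multigraph_four_vertices_22 (G : Fin 5 → SimpleGraph (Fin 4))
    (hG : ¬ HasThreeCrossingPairs G) (he : 22 ≤ ∑ i, (G i).edgeSet.ncard) :
    ∃ u v : Fin 4, u ≠ v ∧ ∀ i : Fin 5, (G i).Adj u v := by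
  exact aux_main G hG he
end

section
/- For every natural number n ≥ 3, every 5-multigraph on n vertices not containing three crossing pairs has total number of edges at most (7n² − n)/4. -/
lemma sdr_aux_s14 (P Q R : Finset (Fin 5)) (hP : 1 ≤ P.card) (hQ : 2 ≤ Q.card) (hR : 3 ≤ R.card) :
    ∃ i ∈ P, ∃ j ∈ Q, ∃ k ∈ R, i ≠ j ∧ i ≠ k ∧ j ≠ k := by
  obtain ⟨i, hi⟩ := Finset.card_pos.mp hP
  obtain ⟨j, hj, hji⟩ := Finset.exists_mem_ne (show 1 < Q.card by omega) i
  have h3 : ({i, j} : Finset (Fin 5)).card < R.card :=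
    lt_of_le_of_lt Finset.card_le_two (by omega)
  obtain ⟨k, hk, hkn⟩ := Finset.exists_mem_notMem_of_card_lt_card h3
  simp only [Finset.mem_insert, Finset.mem_singleton, not_or] at hkn
  exact ⟨i, hi, j, hj, k, hk, hji.symm, fun h => hkn.1 h.symm, fun h => hkn.2 h.symm⟩

lemma hall_aux (P Q R : Finset (Fin 5))
    (h : ∀ i ∈ P, ∀ j ∈ Q, ∀ k ∈ R, i ≠ j → i ≠ k → j ≠ k → False) :
    P.card = 0 ∨ Q.card = 0 ∨ R.card = 0 ∨ (P.card ≤ 1 ∧ Q.card ≤ 1) ∨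
    (P.card ≤ 1 ∧ R.card ≤ 1) ∨ (Q.card ≤ 1 ∧ R.card ≤ 1) ∨
    (P.card ≤ 2 ∧ Q.card ≤ 2 ∧ R.card ≤ 2) := by
  by_contra hc
  have key : (1 ≤ P.card ∧ 2 ≤ Q.card ∧ 3 ≤ R.card) ∨ (1 ≤ P.card ∧ 2 ≤ R.card ∧ 3 ≤ Q.card) ∨
      (1 ≤ Q.card ∧ 2 ≤ P.card ∧ 3 ≤ R.card) ∨ (1 ≤ Q.card ∧ 2 ≤ R.card ∧ 3 ≤ P.card) ∨
      (1 ≤ R.card ∧ 2 ≤ P.card ∧ 3 ≤ Q.card) ∨ (1 ≤ R.card ∧ 2 ≤ Q.card ∧ 3 ≤ P.card) := by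
    omega
  rcases key with ⟨h1, h2, h3⟩ | ⟨h1, h2, h3⟩ | ⟨h1, h2, h3⟩ | ⟨h1, h2, h3⟩ | ⟨h1, h2, h3⟩ |
    ⟨h1, h2, h3⟩ <;>
  · obtain ⟨i, hi, j, hj, k, hk, a, b, d⟩ := sdr_aux_s14 _ _ _ h1 h2 h3
    first
    | exact h i hi j hj k hk a b d
    | exact h i hi k hk j hj b a d.symm
    | exact h j hj i hi k hk a.symm d b
    | exact h k hk i hi j hj b.symm d.symm a
    | exact h j hj k hk i hi d a.symm b.symm
    | exact h k hk j hj i hi d.symm b.symm a.symm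

/-- The forbidden configuration, in terms of colour sets. -/
def NoCross {V : Type*} (c : V → V → Finset (Fin 5)) : Prop :=
  ∀ w x y z : V, ∀ i ∈ c w x ∩ c y z, ∀ j ∈ c w y ∩ c x z, ∀ k ∈ c w z ∩ c x y,
    i ≠ j → i ≠ k → j ≠ k → False

lemma inter_aux (A B : Finset (Fin 5)) : A.card + B.card ≤ 5 + (A ∩ B).card := by
  have h1 := Finset.card_union_add_card_inter A B
  have h2 := Finset.card_le_univ (A ∪ B)
  simp at h2
  omega

lemma c5 (A : Finset (Fin 5)) : A.card ≤ 5 := by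
  have h2 := Finset.card_le_univ A
  simpa using h2

lemma local_aux {V : Type*} {c : V → V → Finset (Fin 5)} (hN : NoCross c) (v x y z : V) :
    ∃ p q r : ℕ, (c v x).card + (c y z).card ≤ 5 + p ∧ (c v y).card + (c x z).card ≤ 5 + q ∧
      (c v z).card + (c x y).card ≤ 5 + r ∧
      (p = 0 ∨ q = 0 ∨ r = 0 ∨ (p ≤ 1 ∧ q ≤ 1) ∨ (p ≤ 1 ∧ r ≤ 1) ∨ (q ≤ 1 ∧ r ≤ 1) ∨
        (p ≤ 2 ∧ q ≤ 2 ∧ r ≤ 2)) :=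
  ⟨_, _, _, inter_aux _ _, inter_aux _ _, inter_aux _ _, hall_aux _ _ _ (hN v x y z)⟩

lemma quad_aux {V : Type*} {c : V → V → Finset (Fin 5)} (hN : NoCross c)
    (v x y z t : V)
    (hxz : (c x z).card = 5) (hyz : (c y z).card = 5)
    (hxt : (c x t).card = 5) (hyt : (c y t).card = 5)
    (hxy : 3 ≤ (c x y).card) (hzt : 2 ≤ (c z t).card) :
    (c v x).card + (c v y).card + (c v z).card + (c v t).card ≤ 14 := by
  have a5 := c5 (c v x)
  have b5 := c5 (c v y)
  have d5 := c5 (c v z)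
  have e5 := c5 (c v t)
  obtain ⟨p1, q1, r1, h1, h2, h3, h4⟩ := local_aux hN v x y z
  obtain ⟨p2, q2, r2, i1, i2, i3, i4⟩ := local_aux hN v x y t
  obtain ⟨p3, q3, r3, j1, j2, j3, j4⟩ := local_aux hN v x z t
  obtain ⟨p4, q4, r4, k1, k2, k3, k4⟩ := local_aux hN v y z t
  generalize (c v x).card = a at *
  generalize (c v y).card = b at *
  generalize (c v z).card = d at *
  generalize (c v t).card = e at *
  rw [hxz, hyz, hxt, hyt] at *
  by_contra hlt
  rcases h4 with h | h | h | h | h | h | h <;> rcases i4 with i | i | i | i | i | i | i <;>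
    first
    | omega
    | (rcases j4 with j | j | j | j | j | j | j <;>
        first
        | omega
        | (rcases k4 with k | k | k | k | k | k | k <;> omega))

section
variable {V : Type*} [DecidableEq V]

lemma split_aux (w : V → V → ℕ) (hs : ∀ u v, w u v = w v u) (S T : Finset V) (hT : T ⊆ S) :
    ∑ u ∈ S, ∑ v ∈ S, w u v = ∑ u ∈ S \ T, ∑ v ∈ S \ T, w u v + ∑ u ∈ T, ∑ v ∈ T, w u v
      + 2 * ∑ v ∈ S \ T, ∑ t ∈ T, w v t := by
  have h : ∀ f : V → ℕ, ∑ u ∈ S, f u = ∑ u ∈ S \ T, f u + ∑ u ∈ T, f u :=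
    fun f => (Finset.sum_sdiff hT).symm
  have h2 : ∑ u ∈ T, ∑ v ∈ S \ T, w u v = ∑ v ∈ S \ T, ∑ t ∈ T, w v t := by
    rw [Finset.sum_comm]
    exact Finset.sum_congr rfl fun u _ => Finset.sum_congr rfl fun v _ => hs _ _
  rw [h]
  simp only [h (fun v => w _ v), Finset.sum_add_distrib]
  rw [h2]; ring

lemma sdiff_aux (S : Finset V) (x y z : V) (hx : x ∈ S) (hy : y ∈ S) (nxz : x ≠ z) (nyz : y ≠ z) :
    S \ {z} = insert x (insert y (S \ {x, y, z})) := by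
  ext a
  simp only [Finset.mem_sdiff, Finset.mem_insert, Finset.mem_singleton]
  by_cases h1 : a = x
  · subst h1; simp [hx, nxz]
  by_cases h2 : a = y
  · subst h2; simp [hy, nyz]
  simp [h1, h2]

set_option maxHeartbeats 2000000 in
lemma core (c : V → V → Finset (Fin 5)) (hs : ∀ u v, c u v = c v u) (h0 : ∀ v, c v v = ∅)
    (hN : NoCross c) (m : ℕ) : ∀ S : Finset V, S.card = m →
    2 * ∑ u ∈ S, ∑ v ∈ S, (c u v).card + m ≤ 7 * m ^ 2 := by
  induction m using Nat.strong_induction_on with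
  | _ m ih =>
  intro S hS
  by_contra hcon
  push Not at hcon
  have hz : ∀ v, (c v v).card = 0 := fun v => by simp [h0]
  have hsc : ∀ u v, (c u v).card = (c v u).card := fun u v => by rw [hs]
  have hmin : ∀ T ⊆ S, T.Nonempty → 14 * (S \ T).card * T.card + 7 * T.card ^ 2 <
      2 * ∑ u ∈ T, ∑ v ∈ T, (c u v).card + 4 * ∑ v ∈ S \ T, ∑ t ∈ T, (c v t).card + T.card := by
    intro T hT hne
    have hpos := Finset.card_pos.mpr hne
    have hcard := Finset.card_sdiff_add_card_eq_card hT
    have h1 := ih (S \ T).card (by omega) (S \ T) rfl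
    have h2 := split_aux (fun u v => (c u v).card) hsc S T hT
    simp only at h2
    rw [h2, ← hS, ← hcard] at hcon
    nlinarith
  have hne : ∀ u v, (c u v).card ≠ 0 → u ≠ v := by
    rintro u v h rfl
    exact h (hz u)
  -- specialisations
  have hm1 : ∀ x ∈ S, 14 * (S \ {x}).card + 6 < 4 * ∑ v ∈ S \ {x}, (c v x).card := by
    intro x hx
    have := hmin {x} (by simpa using hx) (by simp)
    simp [hz] at this
    omega
  have hm2 : ∀ x ∈ S, ∀ y ∈ S, x ≠ y → 28 * (S \ {x, y}).card + 26 <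
      4 * (c x y).card + 4 * ∑ v ∈ S \ {x, y}, ((c v x).card + (c v y).card) := by
    intro x hx y hy hxy
    have := hmin {x, y} (by intro a; simp; rintro (rfl | rfl) <;> assumption) (by simp)
    rw [Finset.card_pair hxy] at this
    simp only [Finset.sum_pair hxy, hz, hsc y x] at this
    omega
  have hm3 : ∀ x ∈ S, ∀ y ∈ S, ∀ z ∈ S, x ≠ y → x ≠ z → y ≠ z →
      42 * (S \ {x, y, z}).card + 60 <
      4 * ((c x y).card + (c x z).card + (c y z).card) +
      4 * ∑ v ∈ S \ {x, y, z}, ((c v x).card + (c v y).card + (c v z).card) := by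
    intro x hx y hy z hz' hxy hxz hyz
    have := hmin {x, y, z} (by intro a; simp; rintro (rfl | rfl | rfl) <;> assumption) (by simp)
    have hn1 : x ∉ ({y, z} : Finset V) := by simp [hxy, hxz]
    rw [Finset.card_insert_of_notMem hn1, Finset.card_pair hyz] at this
    simp only [Finset.sum_insert hn1, Finset.sum_pair hyz, hz, hsc y x, hsc z x, hsc z y,
      ← add_assoc] at this
    omega
  have hm4 : ∀ x ∈ S, ∀ y ∈ S, ∀ z ∈ S, ∀ t ∈ S, x ≠ y → x ≠ z → y ≠ z → x ≠ t → y ≠ t → z ≠ t →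
      56 * (S \ {x, y, z, t}).card + 108 <
      4 * ((c x y).card + (c x z).card + (c x t).card + (c y z).card + (c y t).card
        + (c z t).card) +
      4 * ∑ v ∈ S \ {x, y, z, t}, ((c v x).card + (c v y).card + (c v z).card + (c v t).card) := by
    intro x hx y hy z hz' t ht hxy hxz hyz hxt hyt hzt
    have := hmin {x, y, z, t}
      (by intro a; simp; rintro (rfl | rfl | rfl | rfl) <;> assumption) (by simp)
    have hn1 : x ∉ ({y, z, t} : Finset V) := by simp [hxy, hxz, hxt]
    have hn2 : y ∉ ({z, t} : Finset V) := by simp [hyz, hyt]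
    rw [Finset.card_insert_of_notMem hn1, Finset.card_insert_of_notMem hn2,
      Finset.card_pair hzt] at this
    simp only [Finset.sum_insert hn1, Finset.sum_insert hn2, Finset.sum_pair hzt, hz, hsc y x,
      hsc z x, hsc z y, hsc t x, hsc t y, hsc t z, ← add_assoc] at this
    omega
  -- no quadruple
  have hquad : ∀ x ∈ S, ∀ y ∈ S, ∀ z ∈ S, ∀ t ∈ S, (c x z).card = 5 → (c y z).card = 5 →
      (c x t).card = 5 → (c y t).card = 5 → (c x y).card = 3 → (c z t).card = 2 → False := by
    intro x hx y hy z hz' t ht e1 e2 e3 e4 e5 e6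
    have h := hm4 x hx y hy z hz' t ht (hne _ _ (by omega)) (hne _ _ (by omega))
      (hne _ _ (by omega)) (hne _ _ (by omega)) (hne _ _ (by omega)) (hne _ _ (by omega))
    have h2 := Finset.sum_le_card_nsmul (S \ {x, y, z, t})
      (fun v => (c v x).card + (c v y).card + (c v z).card + (c v t).card) 14
      (fun v _ => quad_aux hN v x y z t e1 e2 e3 e4 e5.ge e6.ge)
    simp only [smul_eq_mul] at h2
    omega
  -- no triangle (5,5,≥3)
  have h553 : ∀ x ∈ S, ∀ y ∈ S, ∀ z ∈ S, (c x z).card = 5 → (c y z).card = 5 →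
      3 ≤ (c x y).card → False := by
    intro x hx y hy z hz' exz eyz exy
    have nxy : x ≠ y := hne _ _ (by omega)
    have nxz : x ≠ z := hne _ _ (by omega)
    have nyz : y ≠ z := hne _ _ (by omega)
    have h3 := hm3 x hx y hy z hz' nxy nxz nyz
    have h1 := hm1 z hz'
    have hxy5 := c5 (c x y)
    set R := S \ {x, y, z} with hR
    have hRz : S \ {z} = insert x (insert y R) := sdiff_aux S x y z hx hy nxz nyz
    have hn1 : x ∉ insert y R := by simp [hR, nxy]
    have hn2 : y ∉ R := by simp [hR]
    rw [hRz, Finset.sum_insert hn1, Finset.sum_insert hn2, Finset.card_insert_of_notMem hn1,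
      Finset.card_insert_of_notMem hn2] at h1
    have hloc : ∀ v ∈ R, ∃ e : ℕ, (c v x).card + (c v y).card + (c v z).card ≤ 10 + e ∧
        (c v z).card + 3 * e ≤ 5 := by
      intro v hv
      have hvS : v ∈ S := (Finset.mem_sdiff.mp hv).1
      have a5 := c5 (c v x)
      have b5 := c5 (c v y)
      have d5 := c5 (c v z)
      by_cases h10 : (c v x).card + (c v y).card + (c v z).card ≤ 10
      · exact ⟨0, by omega, by omega⟩
      · refine ⟨1, ?_, ?_⟩
        · by_contra h11
          have hh := hquad x hx y hy z hz' v hvS exz eyz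
          rw [hsc x v, hsc y v, hsc z v] at hh
          obtain ⟨p, q, r, i1, i2, i3, i4⟩ := local_aux hN v x y z
          have : (c v x).card = 5 ∧ (c v y).card = 5 ∧ (c x y).card = 3 ∧ (c v z).card = 2 := by
            omega
          exact hh this.1 this.2.1 this.2.2.1 this.2.2.2
        · obtain ⟨p, q, r, i1, i2, i3, i4⟩ := local_aux hN v x y z
          omega
    choose! e he1 he2 using hloc
    have s1 := Finset.sum_le_sum he1
    have s2 := Finset.sum_le_sum he2
    simp only [Finset.sum_add_distrib, Finset.sum_const, smul_eq_mul, ← Finset.mul_sum] at s1 s2 h3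
    omega
  have h544 : ∀ x ∈ S, ∀ y ∈ S, ∀ z ∈ S, (c x y).card = 5 → (c x z).card = 4 →
      (c y z).card = 4 → False := by
    intro x hx y hy z hz' exy exz eyz
    have nxy : x ≠ y := hne _ _ (by omega)
    have nxz : x ≠ z := hne _ _ (by omega)
    have nyz : y ≠ z := hne _ _ (by omega)
    have h3 := hm3 x hx y hy z hz' nxy nxz nyz
    have h2 := Finset.sum_le_card_nsmul (S \ {x, y, z})
      (fun v => (c v x).card + (c v y).card + (c v z).card) 10 (by
        intro v hv
        have hvS : v ∈ S := (Finset.mem_sdiff.mp hv).1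
        have a5 := c5 (c v x)
        have b5 := c5 (c v y)
        have d5 := c5 (c v z)
        have g1 := h553 y hy z hz' v hvS
        have g2 := h553 x hx z hz' v hvS
        rw [hsc y v, hsc z v] at g1
        rw [hsc x v, hsc z v] at g2
        have g1' : ¬ ((c v y).card = 5 ∧ (c v z).card = 5) := fun h => g1 h.1 h.2 (by omega)
        have g2' : ¬ ((c v x).card = 5 ∧ (c v z).card = 5) := fun h => g2 h.1 h.2 (by omega)
        obtain ⟨p, q, r, i1, i2, i3, i4⟩ := local_aux hN v x y z
        show (c v x).card + (c v y).card + (c v z).card ≤ 10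
        omega)
    simp only [smul_eq_mul] at h2
    omega
  -- extension of an edge
  have hext : ∀ x ∈ S, ∀ y ∈ S, 1 ≤ (c x y).card →
      ∃ z ∈ S, 8 ≤ (c x z).card + (c y z).card := by
    intro x hx y hy hxy
    by_contra hno
    push Not at hno
    have h := hm2 x hx y hy (hne _ _ (by omega))
    have h5 := c5 (c x y)
    have h2 := Finset.sum_le_card_nsmul (S \ {x, y})
      (fun v => (c v x).card + (c v y).card) 7 (by
        intro v hv
        have := hno v (Finset.mem_sdiff.mp hv).1
        show (c v x).card + (c v y).card ≤ 7
        rw [hsc v x, hsc v y]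
        omega)
    simp only [smul_eq_mul] at h2
    omega
  have no5 : ∀ x ∈ S, ∀ y ∈ S, (c x y).card ≤ 4 := by
    intro x hx y hy
    by_contra h
    have h5 : (c x y).card = 5 := by have := c5 (c x y); omega
    obtain ⟨z, hz', h8⟩ := hext x hx y hy (by omega)
    have := c5 (c x z)
    have := c5 (c y z)
    have hcase : ((c x z).card = 5 ∧ 3 ≤ (c y z).card) ∨ ((c y z).card = 5 ∧ 3 ≤ (c x z).card) ∨
      ((c x z).card = 4 ∧ (c y z).card = 4) := by omega
    rcases hcase with h | h | h
    · exact h553 y hy z hz' x hx (by rw [hsc]; exact h5) (by rw [hsc]; exact h.1) h.2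
    · exact h553 x hx z hz' y hy h5 (by rw [hsc]; exact h.1) h.2
    · exact h544 x hx y hy z hz' h5 h.1 h.2
  have no4 : ∀ x ∈ S, ∀ y ∈ S, (c x y).card ≤ 3 := by
    intro x hx y hy
    by_contra h
    have h4 : (c x y).card = 4 := by have := no5 x hx y hy; omega
    obtain ⟨z, hz', h8⟩ := hext x hx y hy (by omega)
    have b1 := no5 x hx z hz'
    have b2 := no5 y hy z hz'
    have h3 := hm3 x hx y hy z hz' (hne _ _ (by omega)) (hne _ _ (by omega)) (hne _ _ (by omega))
    have h2 := Finset.sum_le_card_nsmul (S \ {x, y, z})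
      (fun v => (c v x).card + (c v y).card + (c v z).card) 10 (by
        intro v hv
        have hvS : v ∈ S := (Finset.mem_sdiff.mp hv).1
        have a5 := no5 v hvS x hx
        have b5 := no5 v hvS y hy
        have d5 := no5 v hvS z hz'
        obtain ⟨p, q, r, i1, i2, i3, i4⟩ := local_aux hN v x y z
        show (c v x).card + (c v y).card + (c v z).card ≤ 10
        omega)
    simp only [smul_eq_mul] at h2
    omega
  have hfin : ∑ u ∈ S, ∑ v ∈ S, (c u v).card ≤ S.card * (S.card * 3) := by
    refine Finset.sum_le_card_nsmul S _ _ fun u hu => ?_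
    exact Finset.sum_le_card_nsmul S _ _ fun v hv => no4 u hu v hv
  rw [hS] at hfin
  nlinarith [Nat.le_self_pow (two_ne_zero) m]

end

/-- For `n ≥ 3`, every `5`-multigraph on `n` vertices without three crossing pairs has
at most `(7n² − n)/4` edges in total. -/
theorem f5_upper_bound (n : ℕ) (hn : 3 ≤ n) (G : Fin 5 → SimpleGraph (Fin n))
    (hG : ¬ HasThreeCrossingPairs G) :
    ((∑ i, (G i).edgeSet.ncard : ℕ) : ℚ) ≤ (7 * n ^ 2 - n) / 4 := by
  classical
  have hcore := core (fun u v => Finset.univ.filter fun i => (G i).Adj u v)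
    (by intro u v; ext i; simp [SimpleGraph.adj_comm]) (by intro v; simp)
    (by
      intro w x y z i hi j hj k hk hij hik hjk
      simp only [Finset.mem_inter, Finset.mem_filter, Finset.mem_univ, true_and] at hi hj hk
      exact hG ⟨i, j, k, hij, hik, hjk, w, x, y, z, hi.1.ne, hj.1.ne, hk.1.ne, hk.2.ne, hj.2.ne,
        hi.2.ne, hi.1, hi.2, hj.1, hj.2, hk.1, hk.2⟩) n Finset.univ (by simp)
  have hsum : ∑ u : Fin n, ∑ v : Fin n, (Finset.univ.filter fun i => (G i).Adj u v).card
      = 2 * ∑ i, (G i).edgeSet.ncard := by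
    simp only [Finset.card_filter]
    rw [Finset.mul_sum]
    have : ∀ i, 2 * (G i).edgeSet.ncard = ∑ u, ∑ v, if (G i).Adj u v then 1 else 0 := by
      intro i
      rw [← SimpleGraph.coe_edgeFinset, Set.ncard_coe_finset,
        ← SimpleGraph.sum_degrees_eq_twice_card_edges]
      refine Finset.sum_congr rfl fun u _ => ?_
      rw [← Finset.card_filter, ← SimpleGraph.card_neighborFinset_eq_degree,
        SimpleGraph.neighborFinset_eq_filter]
    simp only [this]
    conv_rhs => rw [Finset.sum_comm]
    refine Finset.sum_congr rfl fun u _ => ?_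
    exact Finset.sum_comm
  simp only [hsum] at hcore
  have hq : (2 * (2 * (∑ i, (G i).edgeSet.ncard : ℕ)) + n : ℚ) ≤ 7 * n ^ 2 := by
    exact_mod_cast hcore
  linarith
end
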